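/- Let S₁ and S₂ be two disjoint finite sets of vectors in ℝ^d, let m, k be parameters with |S₁|, |S₂| ≤ m, and assume that S₁ ∪ S₂ is (λ, m, k/2)-balanced. If |S₁|·|S₂| ≤ k and ⟨Sum(S₁), Sum(S₂)⟩ ≥ √(θ·|S₁|·|S₂|·d) for some parameter 0 < θ ≤ λ, then there is a subset S₂′ ⊆ S₂ with |S₂′| ≥ θ·|S₂|/(8λ) such that every v ∈ S₂′ satisfies ⟨v, Sum(S₁)⟩ ≥ (1/4)·√(θ·|S₁|·d/|S₂|). -/

import Mathlib

open scoped Classical RealInnerProductSpace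

/-- The sum of a finite set of vectors in `ℝ^d`. -/
noncomputable def SumV {d : ℕ} (T : Finset (EuclideanSpace ℝ (Fin d))) :
    EuclideanSpace ℝ (Fin d) := ∑ v ∈ T, v

/-- A finite set `S` of vectors in `ℝ^d` is `(λ, m, k)`-balanced if for all pairs of disjoint
subsets `S₁, S₂ ⊆ S` with `|S₁|, |S₂| ≤ m` and `|S₁|·|S₂| ≤ k`, one has
`|⟨Sum(S₁), Sum(S₂)⟩| ≤ √(λ·|S₁|·|S₂|·d)`. -/
def IsBalanced {d : ℕ} (S : Finset (EuclideanSpace ℝ (Fin d))) (lam m k : ℝ) : Prop :=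
  ∀ S₁ S₂ : Finset (EuclideanSpace ℝ (Fin d)), S₁ ⊆ S → S₂ ⊆ S → Disjoint S₁ S₂ →
    (S₁.card : ℝ) ≤ m → (S₂.card : ℝ) ≤ m → (S₁.card : ℝ) * (S₂.card : ℝ) ≤ k →
    |⟪SumV S₁, SumV S₂⟫| ≤ Real.sqrt (lam * S₁.card * S₂.card * d)

/-- If `S₁, S₂` are disjoint, `|S₁|, |S₂| ≤ m`, `S₁ ∪ S₂` is
`(λ, m, k/2)`-balanced, `|S₁|·|S₂| ≤ k` and `⟨Sum(S₁), Sum(S₂)⟩ ≥ √(θ|S₁||S₂|d)` for some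
`0 < θ ≤ λ`, then there is `S₂′ ⊆ S₂` with `|S₂′| ≥ θ|S₂|/(8λ)` such that every `v ∈ S₂′`
satisfies `⟨v, Sum(S₁)⟩ ≥ (1/4)·√(θ|S₁|d/|S₂|)`. -/
theorem inner_product_uniformity {d : ℕ}
    (S₁ S₂ : Finset (EuclideanSpace ℝ (Fin d))) (hdisj : Disjoint S₁ S₂)
    (lam m k θ : ℝ) (h1m : (S₁.card : ℝ) ≤ m) (h2m : (S₂.card : ℝ) ≤ m)
    (hbal : IsBalanced (S₁ ∪ S₂) lam m (k / 2))
    (hk : (S₁.card : ℝ) * S₂.card ≤ k)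
    (hθ0 : 0 < θ) (hθ : θ ≤ lam)
    (hip : ⟪SumV S₁, SumV S₂⟫ ≥ Real.sqrt (θ * S₁.card * S₂.card * d)) :
    ∃ S₂' ⊆ S₂, θ * S₂.card / (8 * lam) ≤ (S₂'.card : ℝ) ∧
      ∀ v ∈ S₂', ⟪v, SumV S₁⟫ ≥ (1 / 4) * Real.sqrt (θ * S₁.card * d / S₂.card) := by
  set c : ℝ := (1 / 4) * Real.sqrt (θ * S₁.card * d / S₂.card) with hc
  have hlam : 0 < lam := lt_of_lt_of_le hθ0 hθ
  refine ⟨S₂.filter (fun v => ⟪v, SumV S₁⟫ ≥ c), Finset.filter_subset _ _, ?_, ?_⟩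
  swap
  · intro v hv
    exact (Finset.mem_filter.mp hv).2
  by_contra hcon
  push Not at hcon
  set P := S₂.filter (fun v => ⟪v, SumV S₁⟫ ≥ c) with hP
  set Q := S₂.filter (fun v => ¬ (⟪v, SumV S₁⟫ ≥ c)) with hQ
  have hcard : P.card + Q.card = S₂.card := Finset.card_filter_add_card_filter_not _
  have hcardR : (P.card : ℝ) + Q.card = S₂.card := by exact_mod_cast hcard
  have hsum : ∑ v ∈ P, ⟪v, SumV S₁⟫ + ∑ v ∈ Q, ⟪v, SumV S₁⟫ = ∑ v ∈ S₂, ⟪v, SumV S₁⟫ :=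
    Finset.sum_filter_add_sum_filter_not _ _ _
  have hin : ∀ T : Finset (EuclideanSpace ℝ (Fin d)),
      ⟪SumV S₁, SumV T⟫ = ∑ v ∈ T, ⟪v, SumV S₁⟫ := by
    intro T
    rw [real_inner_comm, show SumV T = ∑ v ∈ T, v from rfl, sum_inner]
  rw [hin, ← hsum] at hip
  have hp0 : (0 : ℝ) ≤ P.card := Nat.cast_nonneg _
  have ha0 : (0 : ℝ) ≤ S₁.card := Nat.cast_nonneg _
  have hn0 : (0 : ℝ) ≤ S₂.card := Nat.cast_nonneg _
  have hd0 : (0 : ℝ) ≤ d := Nat.cast_nonneg _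
  have hcon' : lam * P.card ≤ θ * S₂.card / 8 := by
    rw [lt_div_iff₀ (by positivity)] at hcon
    linarith
  have hp8 : (P.card : ℝ) ≤ S₂.card / 8 := by
    have h1 : θ * S₂.card ≤ lam * S₂.card := mul_le_mul_of_nonneg_right hθ hn0
    have h2 : lam * P.card ≤ lam * (S₂.card / 8) := by linarith
    exact le_of_mul_le_mul_left h2 hlam
  have hn : (0 : ℝ) < S₂.card := by
    rcases hn0.lt_or_eq with h | h
    · exact h
    · rw [← h] at hcon
      simp only [mul_zero, zero_div] at hcon
      linarith
  have hQpos : (0 : ℝ) < Q.card := by linarith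
  have hQne : Q.Nonempty := Finset.card_pos.mp (by exact_mod_cast hQpos)
  set X := Real.sqrt (θ * S₁.card * S₂.card * d) with hX
  have hX0 : 0 ≤ X := Real.sqrt_nonneg _
  have hc0 : 0 ≤ c := by positivity
  have hnc : (S₂.card : ℝ) * c = X / 4 := by
    have : X = S₂.card * Real.sqrt (θ * S₁.card * d / S₂.card) := by
      rw [hX, show θ * S₁.card * S₂.card * d
        = (S₂.card : ℝ) ^ 2 * (θ * S₁.card * d / S₂.card) by field_simp,
        Real.sqrt_mul (by positivity), Real.sqrt_sq hn0]
    rw [this, hc]; ring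
  have hQs : ∑ v ∈ Q, ⟪v, SumV S₁⟫ < X / 4 := by
    have h1 : ∑ v ∈ Q, ⟪v, SumV S₁⟫ < ∑ _v ∈ Q, c := by
      apply Finset.sum_lt_sum_of_nonempty hQne
      intro v hv
      exact not_le.mp (Finset.mem_filter.mp hv).2
    rw [Finset.sum_const, nsmul_eq_mul] at h1
    have h2 : (Q.card : ℝ) * c ≤ S₂.card * c :=
      mul_le_mul_of_nonneg_right (by linarith) hc0
    linarith
  have hPS : P ⊆ S₂ := Finset.filter_subset _ _
  have hb := hbal S₁ P Finset.subset_union_left (hPS.trans Finset.subset_union_right)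
    (Finset.disjoint_of_subset_right hPS hdisj) h1m (by linarith) (by
      have h1 : (S₁.card : ℝ) * P.card ≤ S₁.card * (S₂.card / 8) :=
        mul_le_mul_of_nonneg_left hp8 ha0
      have h2 : 0 ≤ (S₁.card : ℝ) * S₂.card := by positivity
      linarith)
  have hPb : Real.sqrt (lam * S₁.card * P.card * d) ≤ X / 2 := by
    apply Real.sqrt_le_iff.mpr
    refine ⟨by positivity, ?_⟩
    rw [div_pow, hX, Real.sq_sqrt (by positivity)]
    have h1 := mul_le_mul_of_nonneg_right hcon' (mul_nonneg ha0 hd0)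
    have h2 : 0 ≤ θ * S₁.card * S₂.card * d := by positivity
    nlinarith
  have h3 := (le_abs_self _).trans hb
  rw [hin] at h3
  linarith
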